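/- arXiv:1111.5159 — 2 statements merged into one kernel-verified Lean document; each statement's English description precedes it below -/
import Mathlib

section
/- There exists an absolute constant K such that the following holds. Let f : ℝ → ℝ be continuous and strictly convex, and let A, B, C ⊂ ℝ be finite nonempty sets with |B||C| ≥ |A|^2. Then for every real τ ≥ 1, the number of elements x with σ_{f(A),C}(x) ≥ τ is at most K · |A+B|^2 |C|^2 / (|B| τ^3). -/
open Finset Pointwise

noncomputable def dlt (X Y : Finset ℝ) (s : ℝ) : ℕ :=
  ((X ×ˢ Y).filter (fun p => p.1 - p.2 = s)).card

noncomputable def sg (X Y : Finset ℝ) (s : ℝ) : ℕ :=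
  ((X ×ˢ Y).filter (fun p => p.1 + p.2 = s)).card

noncomputable def En (X Y : Finset ℝ) : ℝ :=
  ∑ s ∈ X - X, (dlt X X s : ℝ) * (dlt Y Y s : ℝ)

noncomputable def E3 (X : Finset ℝ) : ℝ :=
  ∑ s ∈ X - X, (dlt X X s : ℝ) ^ 3

noncomputable def E15 (X : Finset ℝ) : ℝ :=
  ∑ s ∈ X - X, (dlt X X s : ℝ) ^ ((3 : ℝ) / 2)

/-!
Each `x` with at least `t` representations gives `|B|` translates `a ↦ (a + b, x - f a)` of the
graph of `-f`, each passing through at least `t` points of the grid `(A + B) × C`. In place of the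
Szemerédi–Trotter theorem, one counts pairs of nearby points on these curves. Cut the grid into
`k × k` cells with `k` about `t / 8`, using `k` blocks of nearly equal size on each axis. The curve
rises and then falls, so it meets at most `4k` cells, and by Cauchy–Schwarz it has at least `t`
ordered pairs of distinct points sharing a cell. By strict convexity two points lie on at most one
of the curves, so the number of curves times `t` is at most the number of pairs of grid points
sharing a cell, which is at most `(2 |A + B|² / k) (2 |C|² / k)`.
-/

section Collisions

variable {α β : Type*} [DecidableEq β]

/-- The pairs of elements of `S`, diagonal ones included, which a colouring `g` does not
separate. For grid points coloured by cell these are the nearby pairs that are counted. -/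
def collisions (S : Finset α) (g : α → β) : Finset (α × α) :=
  {p ∈ S ×ˢ S | g p.1 = g p.2}

/-- The pairs of distinct elements of `S` which a colouring `g` does not separate: the
nearby pairs which determine the curve through them. -/
def offDiagCollisions (S : Finset α) (g : α → β) : Finset (α × α) :=
  {p ∈ S.offDiag | g p.1 = g p.2}

lemma card_collisions (S : Finset α) (g : α → β) :
    #(collisions S g) = ∑ j ∈ S.image g, #{a ∈ S | g a = j} ^ 2 := by
  have hmaps : ∀ p ∈ collisions S g, g p.1 ∈ S.image g :=
    fun p hp => mem_image_of_mem g (mem_product.1 (mem_filter.1 hp).1).1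
  rw [card_eq_sum_card_fiberwise hmaps]
  refine sum_congr rfl fun j _ => ?_
  rw [sq, ← card_product]
  congr 1
  ext p
  grind [collisions]

lemma card_sq_le_card_image_mul_card_collisions (S : Finset α) (g : α → β) :
    #S ^ 2 ≤ #(S.image g) * #(collisions S g) := by
  rw [card_collisions, card_eq_sum_card_image g S]
  exact sq_sum_le_card_mul_sum_sq

lemma card_collisions_le_mul_card {S : Finset α} {g : α → β} {w : ℕ}
    (hw : ∀ j, #{a ∈ S | g a = j} ≤ w) : #(collisions S g) ≤ w * #S := by
  rw [card_collisions, card_eq_sum_card_image g S, mul_sum]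
  refine sum_le_sum fun j _ => ?_
  rw [sq]
  exact Nat.mul_le_mul_right _ (hw j)

lemma card_collisions_eq_add (S : Finset α) (g : α → β) :
    #(collisions S g) = #S + #(offDiagCollisions S g) := by
  classical
  rw [collisions, ← diag_union_offDiag, filter_union,
    card_union_of_disjoint (disjoint_filter_filter (disjoint_diag_offDiag S)),
    filter_true_of_mem fun p hp => congrArg g (mem_diag.1 hp).2, diag_card, offDiagCollisions]

lemma card_le_card_offDiagCollisions {S : Finset α} {g : α → β}
    (hg : 2 * #(S.image g) ≤ #S) : #S ≤ #(offDiagCollisions S g) := by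
  have hsq := card_sq_le_card_image_mul_card_collisions S g
  rw [card_collisions_eq_add] at hsq
  nlinarith

end Collisions

section Blocks

variable {α : Type*} [LinearOrder α]

/-- The number of elements of `D` below `d`, i.e. the position of `d` in the increasing enumeration
of `D`, counted from `0`. Dividing it by `w` cuts `D` into blocks of at most `w` consecutive
elements. -/
def rankIn (D : Finset α) (d : α) : ℕ := #{e ∈ D | e < d}

lemma monotone_rankIn (D : Finset α) : Monotone (rankIn D) :=
  fun _ _ h => card_le_card (monotone_filter_right D fun _ _ he => he.trans_le h)

lemma strictMonoOn_rankIn (D : Finset α) : StrictMonoOn (rankIn D) D := by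
  intro d hd d' _ h
  refine card_lt_card (ssubset_iff_of_subset ?_ |>.2 ⟨d, mem_filter.2 ⟨hd, h⟩, by simp⟩)
  exact monotone_filter_right D fun _ _ he => he.trans h

lemma rankIn_lt_card {D : Finset α} {d : α} (hd : d ∈ D) : rankIn D d < #D :=
  card_lt_card (filter_ssubset.2 ⟨d, hd, lt_irrefl d⟩)

lemma card_filter_rankIn_div_eq_le (D : Finset α) {w : ℕ} (hw : 0 < w) (j : ℕ) :
    #{d ∈ D | rankIn D d / w = j} ≤ w := by
  have hmaps : ∀ d ∈ ({d ∈ D | rankIn D d / w = j} : Finset α),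
      rankIn D d ∈ Ico (j * w) (j * w + w) := by
    intro d hd
    obtain ⟨-, rfl⟩ := mem_filter.1 hd
    exact mem_Ico.2 ⟨Nat.div_mul_le_self _ _, Nat.lt_div_mul_add hw⟩
  have hinj : Set.InjOn (rankIn D) ({d ∈ D | rankIn D d / w = j} : Finset α) :=
    (strictMonoOn_rankIn D).injOn.mono (coe_subset.2 (filter_subset _ _))
  simpa using card_le_card_of_injOn (rankIn D) hmaps hinj

lemma exists_monotone_card_collisions_le (D : Finset α) {k : ℕ} (hk : 0 < k) (hkD : k ≤ #D) :
    ∃ g : α → ℕ, Monotone g ∧ (∀ d ∈ D, g d < k) ∧ k * #(collisions D g) ≤ 2 * #D ^ 2 := by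
  set w := #D ⌈/⌉ k
  have hDw : #D ≤ k * w := le_smul_ceilDiv hk
  have hwD : k * w ≤ 2 * #D := by
    have : k * w ≤ #D + k - 1 := Nat.mul_div_le _ _
    omega
  have hw : 0 < w := Nat.pos_of_mul_pos_left (hk.trans_le (hkD.trans hDw))
  refine ⟨fun d => rankIn D d / w, fun _ _ h => Nat.div_le_div_right (monotone_rankIn D h),
    fun d hd => Nat.div_lt_of_lt_mul ?_, ?_⟩
  · exact (rankIn_lt_card hd).trans_le (hDw.trans_eq (mul_comm _ _))
  · calc k * #(collisions D fun d => rankIn D d / w) ≤ k * (w * #D) :=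
          Nat.mul_le_mul_left _ (card_collisions_le_mul_card (card_filter_rankIn_div_eq_le D hw))
      _ = k * w * #D := (mul_assoc _ _ _).symm
      _ ≤ 2 * #D * #D := Nat.mul_le_mul_right _ hwD
      _ = 2 * #D ^ 2 := by ring

end Blocks

section Cells

variable {ι : Type*} [LinearOrder ι] {S : Finset ι} {p q : ι → ℕ} {k l : ℕ}

lemma card_image_prodMk_le_of_monotoneOn (hp : MonotoneOn p S) (hq : MonotoneOn q S)
    (hpk : ∀ a ∈ S, p a < k) (hql : ∀ a ∈ S, q a < l) :
    #(S.image fun a => (p a, q a)) ≤ k + l := by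
  rw [← card_range (k + l)]
  refine card_le_card_of_injOn (fun z => z.1 + z.2) ?_ ?_
  · intro z hz
    obtain ⟨a, ha, rfl⟩ := mem_image.1 hz
    exact mem_range.2 (add_lt_add (hpk a ha) (hql a ha))
  · intro z hz z' hz' hsum
    obtain ⟨a, ha, rfl⟩ := mem_image.1 hz
    obtain ⟨b, hb, rfl⟩ := mem_image.1 hz'
    dsimp only at hsum
    rw [Prod.mk.injEq]
    rcases le_total a b with h | h
    · have := hp ha hb h
      have := hq ha hb h
      omega
    · have := hp hb ha h
      have := hq hb ha h
      omega

lemma card_image_prodMk_le_of_antitoneOn (hp : MonotoneOn p S) (hq : AntitoneOn q S)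
    (hpk : ∀ a ∈ S, p a < k) (hql : ∀ a ∈ S, q a < l) :
    #(S.image fun a => (p a, q a)) ≤ k + l := by
  have hreflect : (S.image fun a => (p a, q a)) =
      (S.image fun a => (p a, l - 1 - q a)).image (Prod.map id (l - 1 - ·)) := by
    rw [image_image]
    refine image_congr fun a ha => Prod.ext rfl ?_
    have := hql a ha
    simp only [Function.comp_apply, Prod.map_snd]
    omega
  rw [hreflect]
  refine card_image_le.trans (card_image_prodMk_le_of_monotoneOn hp ?_ hpk ?_)
  · exact fun a ha b hb h => Nat.sub_le_sub_left (hq ha hb h) _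
  · intro a ha
    have := hql a ha
    omega

end Cells

section OrderedField

variable {𝕜 : Type*} [Field 𝕜] [LinearOrder 𝕜] [IsStrictOrderedRing 𝕜] {s : Set 𝕜} {f : 𝕜 → 𝕜}

section Quasiconcave

variable {β : Type*} [LinearOrder β] {q : 𝕜 → β} {T : Set 𝕜} {m : 𝕜}

lemma min_le_of_quasiconcaveOn (hq : QuasiconcaveOn 𝕜 s q) {a b c : 𝕜} (ha : a ∈ s) (hc : c ∈ s)
    (hab : a ≤ b) (hbc : b ≤ c) : min (q a) (q c) ≤ q b := by
  have hseg := (hq (min (q a) (q c))).segment_subset ⟨ha, min_le_left _ _⟩ ⟨hc, min_le_right _ _⟩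
  rw [segment_eq_Icc (hab.trans hbc)] at hseg
  exact (hseg ⟨hab, hbc⟩).2

lemma monotoneOn_inter_Iic_of_isMaxOn (hq : QuasiconcaveOn 𝕜 s q) (hT : T ⊆ s) (hm : m ∈ s)
    (hmax : IsMaxOn q T m) : MonotoneOn q (T ∩ Set.Iic m) := by
  rintro a ⟨ha, -⟩ b ⟨-, hbm⟩ hab
  exact (le_min le_rfl (hmax ha)).trans (min_le_of_quasiconcaveOn hq (hT ha) hm hab hbm)

lemma antitoneOn_inter_Ici_of_isMaxOn (hq : QuasiconcaveOn 𝕜 s q) (hT : T ⊆ s) (hm : m ∈ s)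
    (hmax : IsMaxOn q T m) : AntitoneOn q (T ∩ Set.Ici m) := by
  rintro a ⟨-, hma⟩ b ⟨hb, -⟩ hab
  exact (le_min (hmax hb) le_rfl).trans (min_le_of_quasiconcaveOn hq hm (hT hb) hma hab)

lemma card_image_prodMk_le_of_quasiconcaveOn {S : Finset 𝕜} {p q : 𝕜 → ℕ} {k l : ℕ}
    (hS : ↑S ⊆ s) (hp : MonotoneOn p S) (hq : QuasiconcaveOn 𝕜 s q) (hpk : ∀ a ∈ S, p a < k)
    (hql : ∀ a ∈ S, q a < l) : #(S.image fun a => (p a, q a)) ≤ 2 * (k + l) := by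
  rcases S.eq_empty_or_nonempty with rfl | hne
  · simp
  obtain ⟨m, hmS, hmax⟩ := exists_max_image S q hne
  have hcover : S = {a ∈ S | a ≤ m} ∪ {a ∈ S | m ≤ a} := by
    rw [← filter_or, filter_true_of_mem fun a _ => le_total a m]
  have hleft : MonotoneOn q ({a ∈ S | a ≤ m} : Finset 𝕜) := by
    rw [coe_filter]
    exact monotoneOn_inter_Iic_of_isMaxOn hq hS (hS hmS) hmax
  have hright : AntitoneOn q ({a ∈ S | m ≤ a} : Finset 𝕜) := by
    rw [coe_filter]
    exact antitoneOn_inter_Ici_of_isMaxOn hq hS (hS hmS) hmax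
  have hcard_left := card_image_prodMk_le_of_monotoneOn
    (hp.mono (coe_subset.2 (filter_subset _ _))) hleft
    (fun a ha => hpk a (mem_filter.1 ha).1) (fun a ha => hql a (mem_filter.1 ha).1)
  have hcard_right := card_image_prodMk_le_of_antitoneOn
    (hp.mono (coe_subset.2 (filter_subset _ _))) hright
    (fun a ha => hpk a (mem_filter.1 ha).1) (fun a ha => hql a (mem_filter.1 ha).1)
  rw [hcover, image_union, two_mul]
  exact (card_union_le _ _).trans (add_le_add hcard_left hcard_right)

end Quasiconcave

section StrictConvex

lemma sub_lt_sub_of_strictConvexOn (hf : StrictConvexOn 𝕜 s f) {a a' c c' : 𝕜} (ha : a ∈ s)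
    (ha' : a' ∈ s) (hc : c ∈ s) (hc' : c' ∈ s) (hlt : a < a') (hsub : a' - a = c' - c)
    (hac : a < c) : f a' - f a < f c' - f c := by
  have hac' : a' < c' := by linarith
  have hcc' : c < c' := by linarith
  have hslope : (f a' - f a) / (a' - a) < (f c' - f c) / (c' - c) :=
    calc (f a' - f a) / (a' - a) < (f c' - f a) / (c' - a) :=
          hf.secant_strict_mono ha ha' hc' hlt.ne' (hac.trans hcc').ne' hac'
      _ = (f a - f c') / (a - c') := by rw [← neg_sub, ← neg_sub a, neg_div_neg_eq]
      _ < (f c - f c') / (c - c') :=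
          hf.secant_strict_mono hc' ha hc (hac.trans hcc').ne hcc'.ne hac
      _ = (f c' - f c) / (c' - c) := by rw [← neg_sub, ← neg_sub c', neg_div_neg_eq]
  rwa [hsub, div_lt_div_iff_of_pos_right (sub_pos.2 hcc')] at hslope

/- Equivalently, two distinct translates of the graph of `f` meet in at most one point, which is
the pseudoline property behind the Szemerédi–Trotter theorem. -/
lemma injOn_offDiag_sub_sub (hf : StrictConvexOn 𝕜 s f) :
    Set.InjOn (fun p : 𝕜 × 𝕜 => (p.2 - p.1, f p.2 - f p.1)) s.offDiag := by
  rintro ⟨a, a'⟩ ⟨ha, ha', hne⟩ ⟨c, c'⟩ ⟨hc, hc', -⟩ heq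
  obtain ⟨hsub, hfsub⟩ := Prod.mk.inj heq
  suffices hac : a = c by
    subst hac
    exact Prod.ext rfl (sub_left_injective hsub)
  by_contra hac
  wlog hlt : a < c generalizing a a' c c'
  · exact this c c' hc hc' (by grind) a a' ha ha' heq.symm hsub.symm hfsub.symm (Ne.symm hac)
      (lt_of_le_of_ne (not_lt.1 hlt) (Ne.symm hac))
  rcases lt_or_gt_of_ne hne with h | h
  · exact (sub_lt_sub_of_strictConvexOn hf ha ha' hc hc' h hsub hlt).ne hfsub
  · have := sub_lt_sub_of_strictConvexOn hf ha' ha hc' hc h (by linarith) (by linarith)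
    linarith

end StrictConvex

section Representations

/-- The `a ∈ A` for which `x` can be written as `f a + c` with `c ∈ C`. For injective `f` they are
counted by the paper's `σ_{f(A),C}(x)`, and they index the points of the
grid `(A + B) × C` on each of the curves of `x`. -/
def representers {α G : Type*} [Sub G] [DecidableEq G] (f : α → G) (A : Finset α)
    (C : Finset G) (x : G) : Finset α :=
  {a ∈ A | x - f a ∈ C}

lemma addConvolution_image_le_card_representers {α G : Type*} [AddCommGroup G] [DecidableEq G]
    (f : α → G) (A : Finset α) (C : Finset G) (x : G) :
    (A.image f).addConvolution C x ≤ #(representers f A C x) := by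
  refine (card_le_card ?_).trans (card_image_le (f := fun a => (f a, x - f a)))
  rintro ⟨v, c⟩ h
  simp only [mem_filter, mem_product, mem_image] at h
  obtain ⟨⟨⟨a, ha, rfl⟩, hc⟩, rfl⟩ := h
  exact mem_image.2 ⟨a, mem_filter.2 ⟨ha, by simpa using hc⟩, by simp⟩

/-- The cell containing the point `(a + b, x - f a)` of the curve indexed by `y = (x, b)`, when the
two axes are coloured by `g` and `h`. -/
def curveCell {γ δ : Type*} (f : 𝕜 → 𝕜) (g : 𝕜 → γ) (h : 𝕜 → δ) (y : 𝕜 × 𝕜) (a : 𝕜) : γ × δ :=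
  (g (a + y.2), h (y.1 - f a))

lemma sum_card_offDiagCollisions_curveCell_le {γ δ : Type*} [DecidableEq γ] [DecidableEq δ]
    (hf : StrictConvexOn 𝕜 s f) {A : Finset 𝕜} (hA : ↑A ⊆ s) (B C X : Finset 𝕜) (g : 𝕜 → γ)
    (h : 𝕜 → δ) :
    ∑ y ∈ X ×ˢ B, #(offDiagCollisions (representers f A C y.1) (curveCell f g h y)) ≤
      #(collisions (A + B) g) * #(collisions C h) := by
  rw [← card_sigma, ← card_product]
  refine card_le_card_of_injOn (fun w => ((w.2.1 + w.1.2, w.2.2 + w.1.2),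
    (w.1.1 - f w.2.1, w.1.1 - f w.2.2))) ?_ ?_
  · rintro ⟨⟨x, b⟩, ⟨a, a'⟩⟩ hw
    simp only [offDiagCollisions, curveCell, representers, mem_coe, mem_sigma, mem_product,
      mem_filter, mem_offDiag, Prod.mk.injEq] at hw
    obtain ⟨⟨-, hb⟩, ⟨⟨ha, hac⟩, ⟨ha', hac'⟩, -⟩, hg, hh⟩ := hw
    simp only [collisions, mem_coe, mem_product, mem_filter]
    exact ⟨⟨⟨add_mem_add ha hb, add_mem_add ha' hb⟩, hg⟩, ⟨hac, hac'⟩, hh⟩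
  · have hmem : ∀ w ∈ (X ×ˢ B).sigma fun y =>
        offDiagCollisions (representers f A C y.1) (curveCell f g h y), w.2 ∈ s.offDiag := by
      intro w hw
      obtain ⟨ha, ha', hne⟩ := mem_offDiag.1 (mem_filter.1 (mem_sigma.1 hw).2).1
      exact ⟨hA (mem_filter.1 ha).1, hA (mem_filter.1 ha').1, hne⟩
    rintro ⟨⟨x, b⟩, p⟩ hw ⟨⟨y, c⟩, r⟩ hw' heq
    simp only [Prod.mk.injEq] at heq
    obtain ⟨⟨h₁, h₂⟩, h₃, h₄⟩ := heq
    obtain rfl : p = r := injOn_offDiag_sub_sub hf (hmem _ hw) (hmem _ hw')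
      (Prod.ext (by linarith) (by linarith))
    obtain rfl : b = c := add_left_cancel h₁
    obtain rfl : x = y := sub_left_injective h₃
    rfl

lemma card_image_curveCell_le (hf : ConvexOn 𝕜 s f) {S : Finset 𝕜} (hS : ↑S ⊆ s) {g h : 𝕜 → ℕ}
    (hg : Monotone g) (hh : Monotone h) {k l : ℕ} {y : 𝕜 × 𝕜} (hgk : ∀ a ∈ S, g (a + y.2) < k)
    (hhl : ∀ a ∈ S, h (y.1 - f a) < l) : #(S.image (curveCell f g h y)) ≤ 2 * (k + l) := by
  have hquasi : QuasiconcaveOn 𝕜 s fun a => h (y.1 - f a) :=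
    hf.quasiconvexOn.antitone_comp (g := fun v => h (y.1 - v))
      fun _ _ hvw => hh (sub_le_sub_left hvw y.1)
  exact card_image_prodMk_le_of_quasiconcaveOn hS
    ((hg.comp (add_left_mono (a := y.2))).monotoneOn _) hquasi hgk hhl

lemma card_representers_le_card_offDiagCollisions (hf : ConvexOn 𝕜 s f) {A B C : Finset 𝕜}
    (hA : ↑A ⊆ s) {g h : 𝕜 → ℕ} (hg : Monotone g) (hh : Monotone h) {k : ℕ}
    (hgk : ∀ d ∈ A + B, g d < k) (hhk : ∀ c ∈ C, h c < k) {y : 𝕜 × 𝕜} (hy : y.2 ∈ B)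
    (hk : 8 * k ≤ #(representers f A C y.1)) :
    #(representers f A C y.1) ≤
      #(offDiagCollisions (representers f A C y.1) (curveCell f g h y)) := by
  have hcells : #((representers f A C y.1).image (curveCell f g h y)) ≤ 2 * (k + k) :=
    card_image_curveCell_le hf ((coe_subset.2 (filter_subset _ _)).trans hA) hg hh
      (fun a ha => hgk _ (add_mem_add (mem_filter.1 ha).1 hy))
      (fun a ha => hhk _ (mem_filter.1 ha).2)
  exact card_le_card_offDiagCollisions (by omega)

lemma cube_mul_card_mul_card_le_of_le_addConvolution (hf : StrictConvexOn 𝕜 s f)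
    {A B C X : Finset 𝕜} (hA : ↑A ⊆ s) (hB : B.Nonempty) {k : ℕ} (hk : 0 < k)
    (hX : ∀ x ∈ X, 8 * k ≤ (A.image f).addConvolution C x) :
    2 * k ^ 3 * (#X * #B) ≤ #(A + B) ^ 2 * #C ^ 2 := by
  rcases X.eq_empty_or_nonempty with rfl | ⟨x₀, hx₀⟩
  · simp
  have hkD : k ≤ #(A + B) := by
    have := (hX x₀ hx₀).trans addConvolution_le_card_left
    have : #(A.image f) ≤ #(A + B) := card_image_le.trans (card_le_card_add_right hB)
    omega
  have hkC : k ≤ #C := by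
    have := (hX x₀ hx₀).trans addConvolution_le_card_right
    omega
  obtain ⟨g, hg, hgk, hg_card⟩ := exists_monotone_card_collisions_le (A + B) hk hkD
  obtain ⟨h, hh, hhk, hh_card⟩ := exists_monotone_card_collisions_le C hk hkC
  have hcount : 8 * k * (#X * #B) ≤ #(collisions (A + B) g) * #(collisions C h) := by
    refine le_trans ?_ (sum_card_offDiagCollisions_curveCell_le hf hA B C X g h)
    rw [← card_product, mul_comm, ← smul_eq_mul]
    refine card_nsmul_le_sum _ _ _ fun y hy => ?_
    have hy_rich := (hX y.1 (mem_product.1 hy).1).trans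
      (addConvolution_image_le_card_representers f A C y.1)
    exact hy_rich.trans (card_representers_le_card_offDiagCollisions hf.convexOn hA hg hh hgk
      hhk (mem_product.1 hy).2 hy_rich)
  refine Nat.le_of_mul_le_mul_left (c := 4) ?_ (by norm_num)
  calc 4 * (2 * k ^ 3 * (#X * #B)) = k ^ 2 * (8 * k * (#X * #B)) := by ring
    _ ≤ k ^ 2 * (#(collisions (A + B) g) * #(collisions C h)) := Nat.mul_le_mul_left _ hcount
    _ = k * #(collisions (A + B) g) * (k * #(collisions C h)) := by ring
    _ ≤ 2 * #(A + B) ^ 2 * (2 * #C ^ 2) := Nat.mul_le_mul hg_card hh_card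
    _ = 4 * (#(A + B) ^ 2 * #C ^ 2) := by ring

lemma card_mul_card_mul_cube_le_of_le_addConvolution (hf : StrictConvexOn 𝕜 s f)
    {A B C X : Finset 𝕜} (hA : ↑A ⊆ s) (hB : B.Nonempty) {τ : ℝ} (hτ : 8 ≤ τ)
    (hX : ∀ x ∈ X, τ ≤ ((A.image f).addConvolution C x : ℝ)) :
    (#X : ℝ) * #B * τ ^ 3 ≤ 2048 * (#(A + B) : ℝ) ^ 2 * (#C : ℝ) ^ 2 := by
  set k := ⌊τ / 8⌋₊
  have hk : 0 < k := Nat.floor_pos.2 (by linarith)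
  have hkτ : 8 * (k : ℝ) ≤ τ := by linarith [Nat.floor_le (show 0 ≤ τ / 8 by linarith)]
  have hτk : τ ≤ 16 * k := by
    have := Nat.lt_floor_add_one (τ / 8)
    have : (1 : ℝ) ≤ k := by exact_mod_cast hk
    linarith
  have hrich : ∀ x ∈ X, 8 * k ≤ (A.image f).addConvolution C x :=
    fun x hx => by exact_mod_cast hkτ.trans (hX x hx)
  have hcount : 2 * (k : ℝ) ^ 3 * ((#X : ℝ) * #B) ≤ (#(A + B) : ℝ) ^ 2 * (#C : ℝ) ^ 2 := by
    exact_mod_cast cube_mul_card_mul_card_le_of_le_addConvolution hf hA hB hk hrich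
  calc (#X : ℝ) * #B * τ ^ 3 ≤ (#X : ℝ) * #B * (16 * k) ^ 3 := by gcongr
    _ = 2048 * (2 * (k : ℝ) ^ 3 * ((#X : ℝ) * #B)) := by ring
    _ ≤ 2048 * ((#(A + B) : ℝ) ^ 2 * (#C : ℝ) ^ 2) := by gcongr
    _ = 2048 * (#(A + B) : ℝ) ^ 2 * (#C : ℝ) ^ 2 := by ring

end Representations

lemma card_image_add_mul_card_le {α G : Type*} [Add α] [IsCancelAdd α] [DecidableEq α] [Add G]
    [DecidableEq G] (f : α → G) (A : Finset α) {B : Finset α} (hB : B.Nonempty) (C : Finset G) :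
    #(A.image f + C) * #B ≤ #(A + B) ^ 2 * #C := by
  rcases A.eq_empty_or_nonempty with rfl | hA
  · simp
  calc #(A.image f + C) * #B ≤ #(A.image f) * #C * #B := Nat.mul_le_mul_right _ card_add_le
    _ ≤ #(A + B) * #C * #(A + B) := by
      have hAB : #(A.image f) ≤ #(A + B) := card_image_le.trans (card_le_card_add_right hB)
      exact Nat.mul_le_mul (Nat.mul_le_mul_right _ hAB) (card_le_card_add_left hA)
    _ = #(A + B) ^ 2 * #C := by ring

theorem stmt4_general (hf : StrictConvexOn 𝕜 s f) {A B C : Finset 𝕜} (hA : ↑A ⊆ s)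
    (hB : B.Nonempty) {τ : ℝ} (hτ : 0 < τ) :
    (#{x ∈ A.image f + C | τ ≤ ((A.image f).addConvolution C x : ℝ)} : ℝ) ≤
      2048 * (#(A + B) : ℝ) ^ 2 * (#C : ℝ) ^ 2 / (#B * τ ^ 3) := by
  set X := {x ∈ A.image f + C | τ ≤ ((A.image f).addConvolution C x : ℝ)}
  have : (0 : ℝ) < #B := by exact_mod_cast hB.card_pos
  rw [le_div_iff₀ (by positivity), ← mul_assoc]
  rcases le_or_gt 8 τ with hlarge | hsmall
  · exact card_mul_card_mul_cube_le_of_le_addConvolution hf hA hB hlarge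
      fun x hx => (mem_filter.1 hx).2
  · have hcount_nat : #X * #B ≤ #(A + B) ^ 2 * #C ^ 2 :=
      calc #X * #B ≤ #(A.image f + C) * #B := Nat.mul_le_mul_right _ (card_filter_le _ _)
        _ ≤ #(A + B) ^ 2 * #C := card_image_add_mul_card_le f A hB C
        _ ≤ #(A + B) ^ 2 * #C ^ 2 := Nat.mul_le_mul_left _ (Nat.le_self_pow two_ne_zero _)
    have hcount : (#X : ℝ) * #B ≤ (#(A + B) : ℝ) ^ 2 * (#C : ℝ) ^ 2 := by
      exact_mod_cast hcount_nat
    calc (#X : ℝ) * #B * τ ^ 3 ≤ (#(A + B) : ℝ) ^ 2 * (#C : ℝ) ^ 2 * 8 ^ 3 :=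
          mul_le_mul hcount (pow_le_pow_left₀ hτ.le hsmall.le 3) (by positivity) (by positivity)
      _ ≤ 2048 * (#(A + B) : ℝ) ^ 2 * (#C : ℝ) ^ 2 := by
          nlinarith [sq_nonneg (#(A + B) * #C : ℝ)]

end OrderedField

theorem stmt4 : ∃ K : ℝ, 0 < K ∧
    ∀ f : ℝ → ℝ, Continuous f → StrictConvexOn ℝ Set.univ f →
    ∀ A B C : Finset ℝ, A.Nonempty → B.Nonempty → C.Nonempty →
    A.card ^ 2 ≤ B.card * C.card →
    ∀ τ : ℝ, 1 ≤ τ →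
    (((A.image f + C).filter (fun x => τ ≤ (sg (A.image f) C x : ℝ))).card : ℝ) ≤
      K * ((A + B).card : ℝ) ^ 2 * (C.card : ℝ) ^ 2 / ((B.card : ℝ) * τ ^ 3) := by
  refine ⟨2048, by norm_num, fun f _ hf A B C _ hB _ _ τ hτ => ?_⟩
  exact stmt4_general hf (Set.subset_univ _) hB (zero_lt_one.trans_le hτ)
end

section
/- There exists an absolute constant K such that the following holds. Let f : ℝ → ℝ be continuous and strictly convex, and let A, B, C ⊂ ℝ be finite nonempty sets with |B||C| ≥ |A|^2. Then for every real τ ≥ 1, the number of elements y with σ_{A,B}(y) ≥ τ is at most K · |f(A)+C|^2 |B|^2 / (|C| τ^3). -/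
open Finset Pointwise

/-! Translating the graph of `f` over `A` by the vectors in `B × C` gives curves through the points
of the grid `Y × (f(A) + C)`, where `Y` is the set of `τ`-rich sums, with at least `|C| |Y| τ`
incidences. Instead of the Szemerédi–Trotter theorem we use that the curves are translates of a
convex graph and that the points form a grid. Cut the grid into boxes of `u` by `v` points. A curve
splits into a decreasing and an increasing piece, so it meets only `O(|Y| / u + |f(A) + C| / v + 1)`
boxes. All but one of its points in a box can be charged to a pair of grid points in that box, and
by strict convexity a pair of points lies on at most one of the curves. Taking `u ≈ |B| / τ` and
`v ≈ |f(A) + C| |B| / (|Y| τ)`, up to a constant, makes the charged incidences at least half of the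
total, unless `|Y| τ = O(|B|)`; in that case `τ ≤ min(|A|, |B|)` and `|A| |C| = O(|f(A) + C|²)`
suffice. -/

section Blocks

variable {α β ι : Type*} [LinearOrder α] [LinearOrder β] [LinearOrder ι]

/-- The index of the block containing `x` when a finite set `S` is cut, in increasing order, into
consecutive blocks of `u` points each. It is defined for points outside `S` too, which makes it
monotone on the whole order, and it is `0` when `u = 0`. -/
def blockIndex (S : Finset α) (u : ℕ) (x : α) : ℕ :=
  #{z ∈ S | z < x} / u

theorem monotone_blockIndex (S : Finset α) (u : ℕ) : Monotone (blockIndex S u) := fun _ _ hxy =>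
  Nat.div_le_div_right (card_le_card (monotone_filter_right S fun _ _ hz => hz.trans_le hxy))

theorem blockIndex_le (S : Finset α) (u : ℕ) (x : α) : blockIndex S u x ≤ #S / u :=
  Nat.div_le_div_right (card_filter_le _ _)

theorem strictMonoOn_card_filter_lt (S : Finset α) :
    StrictMonoOn (fun x => #{z ∈ S | z < x}) S := fun x hx _ _ hxy =>
  card_lt_card <| (ssubset_iff_of_subset
    (monotone_filter_right S fun _ _ hz => hz.trans hxy)).2
      ⟨x, mem_filter.2 ⟨hx, hxy⟩, fun h => lt_irrefl x (mem_filter.1 h).2⟩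

theorem card_filter_blockIndex_eq_le (S : Finset α) {u : ℕ} (hu : 0 < u) (k : ℕ) :
    #{x ∈ S | blockIndex S u x = k} ≤ u := by
  have hmaps : Set.MapsTo (fun x => #{z ∈ S | z < x}) {x ∈ S | blockIndex S u x = k}
      (Ico (k * u) (k * u + u)) := by
    rintro x ⟨-, hx⟩
    have := (Nat.div_eq_iff hu).1 hx
    simp only [coe_Ico, Set.mem_Ico]
    omega
  calc #{x ∈ S | blockIndex S u x = k}
      ≤ #(Ico (k * u) (k * u + u)) :=
        card_le_card_of_injOn _ (by simpa using hmaps)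
          ((strictMonoOn_card_filter_lt S).injOn.mono (coe_subset.2 (filter_subset _ _)))
    _ = u := by simp

/-- The cell containing `p` when the grid `S ×ˢ T` is cut into boxes of at most `u` by `v` points,
encoded by the pair of block indices of its coordinates. -/
def gridCell (S : Finset α) (T : Finset β) (u v : ℕ) (p : α × β) : ℕ × ℕ :=
  (blockIndex S u p.1, blockIndex T v p.2)

theorem card_filter_gridCell_eq_le (S : Finset α) (T : Finset β) {u v : ℕ} (hu : 0 < u)
    (hv : 0 < v) (k : ℕ × ℕ) : #{p ∈ S ×ˢ T | gridCell S T u v p = k} ≤ u * v := by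
  simp only [gridCell, Prod.ext_iff]
  rw [filter_product (fun x => blockIndex S u x = k.1) (fun y => blockIndex T v y = k.2),
    card_product]
  exact Nat.mul_le_mul (card_filter_blockIndex_eq_le S hu _) (card_filter_blockIndex_eq_le T hv _)

theorem card_filter_gridCell_eq_gridCell_le (S : Finset α) (T : Finset β) {u v : ℕ} (hu : 0 < u)
    (hv : 0 < v) :
    #{z ∈ (S ×ˢ T) ×ˢ (S ×ˢ T) | gridCell S T u v z.2 = gridCell S T u v z.1} ≤
      #S * #T * (u * v) := by
  rw [card_filter, sum_product]
  simp only [← card_filter]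
  calc ∑ p ∈ S ×ˢ T, #{q ∈ S ×ˢ T | gridCell S T u v q = gridCell S T u v p}
      ≤ #(S ×ˢ T) • (u * v) :=
        sum_le_card_nsmul _ _ _ fun p _ => card_filter_gridCell_eq_le S T hu hv _
    _ = #S * #T * (u * v) := by rw [card_product, smul_eq_mul]

theorem card_image_prodMk_le_of_monotoneOn_s5 {I : Finset ι} {p q : ι → ℕ} {m n : ℕ}
    (hp : MonotoneOn p I) (hq : MonotoneOn q I) (hm : ∀ i ∈ I, p i ≤ m) (hn : ∀ i ∈ I, q i ≤ n) :
    #(I.image fun i => (p i, q i)) ≤ m + n + 1 := by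
  have hinj : Set.InjOn (fun z : ℕ × ℕ => z.1 + z.2) (I.image fun i => (p i, q i)) := by
    simp only [Set.InjOn, coe_image, Set.forall_mem_image, Prod.mk.injEq]
    intro i hi j hj hij
    rcases le_total i j with h | h
    · have := hp hi hj h
      have := hq hi hj h
      omega
    · have := hp hj hi h
      have := hq hj hi h
      omega
  have hmaps : ∀ z ∈ I.image fun i => (p i, q i), z.1 + z.2 ∈ range (m + n + 1) := by
    simp only [forall_mem_image, mem_range, Nat.lt_succ_iff]
    exact fun i hi => Nat.add_le_add (hm i hi) (hn i hi)
  simpa only [card_range] using card_le_card_of_injOn _ hmaps hinj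

theorem card_image_prodMk_le_of_monotoneOn_antitoneOn {I : Finset ι} {p q : ι → ℕ} {m n : ℕ}
    (hp : MonotoneOn p I) (hq : AntitoneOn q I) (hm : ∀ i ∈ I, p i ≤ m) (hn : ∀ i ∈ I, q i ≤ n) :
    #(I.image fun i => (p i, q i)) ≤ m + n + 1 := by
  have hreflect : (I.image fun i => (p i, q i)) =
      (I.image fun i => (p i, n - q i)).image fun z => (z.1, n - z.2) := by
    rw [image_image]
    refine image_congr fun i hi => ?_
    simp only [Function.comp_apply, Nat.sub_sub_self (hn i hi)]
  rw [hreflect]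
  exact card_image_le.trans <| card_image_prodMk_le_of_monotoneOn_s5 hp
    (fun i hi j hj h => Nat.sub_le_sub_left (hq hi hj h) n) hm fun _ _ => Nat.sub_le _ _

theorem card_image_gridCell_le_of_monotoneOn (S : Finset α) (T : Finset β) (u v : ℕ)
    {I : Finset ι} {x : ι → α} {y : ι → β} (hx : MonotoneOn x I) (hy : MonotoneOn y I) :
    #(I.image fun i => gridCell S T u v (x i, y i)) ≤ #S / u + #T / v + 1 :=
  card_image_prodMk_le_of_monotoneOn_s5 ((monotone_blockIndex S u).comp_monotoneOn hx)
    ((monotone_blockIndex T v).comp_monotoneOn hy) (fun _ _ => blockIndex_le S u _)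
    fun _ _ => blockIndex_le T v _

theorem card_image_gridCell_le_of_monotoneOn_antitoneOn (S : Finset α) (T : Finset β) (u v : ℕ)
    {I : Finset ι} {x : ι → α} {y : ι → β} (hx : MonotoneOn x I) (hy : AntitoneOn y I) :
    #(I.image fun i => gridCell S T u v (x i, y i)) ≤ #S / u + #T / v + 1 :=
  card_image_prodMk_le_of_monotoneOn_antitoneOn ((monotone_blockIndex S u).comp_monotoneOn hx)
    ((monotone_blockIndex T v).comp_antitoneOn hy) (fun _ _ => blockIndex_le S u _)
    fun _ _ => blockIndex_le T v _

end Blocks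

theorem card_le_card_image_add_card_collisions {α β : Type*} [DecidableEq β]
    (I : Finset α) (c : α → β) :
    #I ≤ #(I.image c) + #{z ∈ I.offDiag | c z.1 = c z.2} := by
  classical
  induction I using Finset.induction_on with
  | empty => simp
  | insert a I ha ih =>
    have hsub : {z ∈ I.offDiag | c z.1 = c z.2} ⊆ {z ∈ (insert a I).offDiag | c z.1 = c z.2} :=
      filter_subset_filter _ (offDiag_mono (subset_insert a I))
    rw [card_insert_of_notMem ha, image_insert]
    by_cases hc : c a ∈ I.image c
    · obtain ⟨b, hb, hbc⟩ := mem_image.1 hc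
      have hssub := card_lt_card <| (ssubset_iff_of_subset hsub).2 ⟨(a, b), by
        simp [hb, hbc, (ne_of_mem_of_not_mem hb ha).symm], by simp [ha]⟩
      rw [insert_eq_of_mem hc]
      omega
    · have := card_le_card hsub
      rw [card_insert_of_notMem hc]
      omega

/-- The incidences between a point set `P` and the graph of `f` over `A` translated by `w`, each
recorded by its parameter `a ∈ A`. -/
def graphIncidences {α β : Type*} [Add α] [Add β] [DecidableEq α] [DecidableEq β] (f : α → β)
    (A : Finset α) (P : Finset (α × β)) (w : α × β) : Finset α :=
  {a ∈ A | (a, f a) + w ∈ P}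

section StrictConvex

variable {𝕜 : Type*} [Field 𝕜] [LinearOrder 𝕜] [IsStrictOrderedRing 𝕜] {s : Set 𝕜} {f : 𝕜 → 𝕜}

theorem strictMonoOn_sub_of_strictConvexOn (hf : StrictConvexOn 𝕜 s f) {h : 𝕜} (hh : 0 < h) :
    StrictMonoOn (fun x => f (x + h) - f x) {x | x ∈ s ∧ x + h ∈ s} := by
  rintro x ⟨hx, hxh⟩ y ⟨hy, hyh⟩ hxy
  refine (div_lt_div_iff_of_pos_right hh).1 ?_
  calc (f (x + h) - f x) / h = (f (x + h) - f x) / (x + h - x) := by rw [add_sub_cancel_left]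
    _ < (f (y + h) - f x) / (y + h - x) :=
        hf.secant_strict_mono hx hxh hyh (by linarith) (by linarith) (by linarith)
    _ = (f x - f (y + h)) / (x - (y + h)) := by rw [← neg_div_neg_eq, neg_sub, neg_sub]
    _ < (f y - f (y + h)) / (y - (y + h)) :=
        hf.secant_strict_mono hyh hx hy (by linarith) (by linarith) hxy
    _ = (f (y + h) - f y) / h := by rw [← neg_div_neg_eq, neg_sub, neg_sub, add_sub_cancel_left]

theorem injOn_offDiag_of_strictConvexOn (hf : StrictConvexOn 𝕜 s f) :
    Set.InjOn (fun z : 𝕜 × 𝕜 => (z.1 - z.2, f z.1 - f z.2)) s.offDiag := by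
  rintro ⟨x, x'⟩ ⟨hx, hx', hne⟩ ⟨y, y'⟩ ⟨hy, hy', -⟩ heq
  obtain ⟨hsub, hfsub⟩ : x - x' = y - y' ∧ f x - f x' = f y - f y' := Prod.mk.inj heq
  clear heq
  simp only at hx hx' hne hy hy'
  wlog hlt : x' < x generalizing x x' y y'
  · exact congrArg Prod.swap <| this x' x hx' hx hne.symm y' y hy' hy (by linarith) (by linarith)
      (hne.lt_of_le (not_lt.1 hlt))
  obtain ⟨h, rfl⟩ : ∃ h, x = x' + h := ⟨x - x', by ring⟩
  obtain rfl : y = y' + h := by linarith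
  obtain rfl : x' = y' := (strictMonoOn_sub_of_strictConvexOn hf (pos_of_lt_add_right hlt)).injOn
    ⟨hx', hx⟩ ⟨hy', hy⟩ hfsub
  rfl

theorem lt_max_of_strictConvexOn (hf : StrictConvexOn 𝕜 s f) {x y z : 𝕜} (hx : x ∈ s)
    (hz : z ∈ s) (hxy : x < y) (hyz : y < z) : f y < max (f x) (f z) :=
  hf.lt_on_openSegment hx hz (hxy.trans hyz).ne
    ((openSegment_eq_Ioo (hxy.trans hyz)).symm ▸ ⟨hxy, hyz⟩)

theorem exists_strictAntiOn_strictMonoOn_of_strictConvexOn (hf : StrictConvexOn 𝕜 s f)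
    {A : Finset 𝕜} (hA : ↑A ⊆ s) :
    ∃ t, StrictAntiOn f ({a ∈ A | a < t} : Finset 𝕜) ∧
      StrictMonoOn f ({a ∈ A | ¬ a < t} : Finset 𝕜) := by
  rcases A.eq_empty_or_nonempty with rfl | hne
  · exact ⟨0, by simp [StrictAntiOn, StrictMonoOn]⟩
  -- If `f` attains its minimum over `A` twice, only the larger of the two points works.
  obtain ⟨t, ht, hmin⟩ := A.exists_min_image (fun a => toLex (f a, OrderDual.toDual a)) hne
  simp only [Prod.Lex.toLex_le_toLex, OrderDual.toDual_le_toDual] at hmin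
  have hle : ∀ a ∈ A, f t ≤ f a := fun a ha => (hmin a ha).elim le_of_lt fun h => h.1.le
  have hlt : ∀ a ∈ A, t < a → f t < f a := fun a ha hta =>
    (hmin a ha).resolve_right fun h => h.2.not_gt hta
  simp only [StrictAntiOn, StrictMonoOn, coe_filter, Set.mem_ofPred_eq, not_lt]
  refine ⟨t, fun x hx y hy hxy => ?_, fun x hx y hy hxy => ?_⟩
  · simpa only [max_eq_left (hle x hx.1)] using
      lt_max_of_strictConvexOn hf (hA hx.1) (hA ht) hxy hy.2
  · rcases hx.2.eq_or_lt with rfl | htx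
    · exact hlt y hy.1 hxy
    · simpa only [max_eq_right (hle y hy.1)] using
        lt_max_of_strictConvexOn hf (hA ht) (hA hy.1) htx hxy

theorem card_le_two_mul_card_image_of_strictConvexOn (hf : StrictConvexOn 𝕜 s f)
    {A : Finset 𝕜} (hA : ↑A ⊆ s) : #A ≤ 2 * #(A.image f) := by
  obtain ⟨t, hanti, hmono⟩ := exists_strictAntiOn_strictMonoOn_of_strictConvexOn hf hA
  calc #A = #{a ∈ A | a < t} + #{a ∈ A | ¬ a < t} := (card_filter_add_card_filter_not _).symm
    _ = #({a ∈ A | a < t}.image f) + #({a ∈ A | ¬ a < t}.image f) := by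
        rw [card_image_of_injOn hanti.injOn, card_image_of_injOn hmono.injOn]
    _ ≤ #(A.image f) + #(A.image f) := by gcongr <;> exact filter_subset _ _
    _ = 2 * #(A.image f) := (two_mul _).symm

theorem card_image_gridCell_graph_le (hf : StrictConvexOn 𝕜 s f) {A : Finset 𝕜} (hA : ↑A ⊆ s)
    (S T : Finset 𝕜) (u v : ℕ) (w : 𝕜 × 𝕜) :
    #(A.image fun a => gridCell S T u v ((a, f a) + w)) ≤ 2 * (#S / u + #T / v + 1) := by
  obtain ⟨t, hanti, hmono⟩ := exists_strictAntiOn_strictMonoOn_of_strictConvexOn hf hA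
  have hfst : Monotone fun a : 𝕜 => a + w.1 := monotone_id.add_const w.1
  rw [← filter_union_filter_not_eq (· < t) A, image_union, two_mul]
  exact (card_union_le _ _).trans <| Nat.add_le_add
    (card_image_gridCell_le_of_monotoneOn_antitoneOn S T u v (hfst.monotoneOn _)
      (hanti.antitoneOn.add_const w.2))
    (card_image_gridCell_le_of_monotoneOn S T u v (hfst.monotoneOn _)
      (hmono.monotoneOn.add_const w.2))

theorem sum_card_collisions_le (hf : StrictConvexOn 𝕜 s f) {A : Finset 𝕜} (hA : ↑A ⊆ s)
    (S T : Finset 𝕜) (W : Finset (𝕜 × 𝕜)) {u v : ℕ} (hu : 0 < u) (hv : 0 < v) :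
    ∑ w ∈ W, #{z ∈ (graphIncidences f A (S ×ˢ T) w).offDiag |
        gridCell S T u v ((z.1, f z.1) + w) = gridCell S T u v ((z.2, f z.2) + w)} ≤
      #S * #T * (u * v) := by
  rw [← card_sigma]
  refine le_trans ?_ (card_filter_gridCell_eq_gridCell_le S T hu hv)
  -- A pair of distinct points of one translate determines both the pair and the translate.
  refine card_le_card_of_injOn
    (fun z => ((z.2.1, f z.2.1) + z.1, (z.2.2, f z.2.2) + z.1)) ?_ ?_
  · rintro ⟨w, a, a'⟩ hz
    simp only [graphIncidences, coe_sigma, Set.mem_sigma_iff, mem_coe, mem_filter,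
      mem_offDiag] at hz
    simp only [coe_filter, Set.mem_ofPred_eq, mem_product (s := S ×ˢ T)]
    exact ⟨⟨hz.2.1.1.2, hz.2.1.2.1.2⟩, hz.2.2.symm⟩
  · rintro ⟨w, a, a'⟩ hz ⟨w₁, a₁, a₁'⟩ hz₁ heq
    simp only [graphIncidences, coe_sigma, Set.mem_sigma_iff, mem_coe, mem_filter,
      mem_offDiag] at hz hz₁
    obtain ⟨h, h'⟩ := Prod.mk.inj heq
    have hpair : (a, a') = (a₁, a₁') := injOn_offDiag_of_strictConvexOn hf
      ⟨hA hz.2.1.1.1, hA hz.2.1.2.1.1, hz.2.1.2.2⟩ ⟨hA hz₁.2.1.1.1, hA hz₁.2.1.2.1.1, hz₁.2.1.2.2⟩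
      (by simpa using congrArg₂ (· - ·) h h')
    obtain ⟨rfl, rfl⟩ := Prod.mk.inj hpair
    obtain rfl : w = w₁ := add_left_cancel h
    rfl

theorem sum_card_graphIncidences_le (hf : StrictConvexOn 𝕜 s f) {A : Finset 𝕜} (hA : ↑A ⊆ s)
    (S T : Finset 𝕜) (W : Finset (𝕜 × 𝕜)) {u v : ℕ} (hu : 0 < u) (hv : 0 < v) :
    ∑ w ∈ W, #(graphIncidences f A (S ×ˢ T) w) ≤
      #W * (2 * (#S / u + #T / v + 1)) + #S * #T * (u * v) := by
  let cell (w : 𝕜 × 𝕜) (a : 𝕜) : ℕ × ℕ := gridCell S T u v ((a, f a) + w)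
  let inc (w : 𝕜 × 𝕜) : Finset 𝕜 := graphIncidences f A (S ×ˢ T) w
  have hcells (w : 𝕜 × 𝕜) : #((inc w).image (cell w)) ≤ 2 * (#S / u + #T / v + 1) :=
    (card_le_card (image_subset_image (filter_subset _ _))).trans
      (card_image_gridCell_graph_le hf hA S T u v w)
  calc ∑ w ∈ W, #(inc w)
      ≤ ∑ w ∈ W, (2 * (#S / u + #T / v + 1) +
          #{z ∈ (inc w).offDiag | cell w z.1 = cell w z.2}) :=
        sum_le_sum fun w _ => (card_le_card_image_add_card_collisions (inc w) (cell w)).trans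
          (Nat.add_le_add_right (hcells w) _)
    _ = #W * (2 * (#S / u + #T / v + 1)) +
          ∑ w ∈ W, #{z ∈ (inc w).offDiag | cell w z.1 = cell w z.2} := by
        rw [sum_add_distrib, sum_const, smul_eq_mul]
    _ ≤ #W * (2 * (#S / u + #T / v + 1)) + #S * #T * (u * v) :=
        Nat.add_le_add_left (sum_card_collisions_le hf hA S T W hu hv) _

end StrictConvex

theorem sum_sg_eq_card_filter (A B Y : Finset ℝ) :
    ∑ y ∈ Y, sg A B y = #{p ∈ A ×ˢ B | p.1 + p.2 ∈ Y} :=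
  sum_card_fiberwise_eq_card_filter _ _ _

theorem sg_le_card_left (A B : Finset ℝ) (y : ℝ) : sg A B y ≤ #A := by
  refine card_le_card_of_injOn Prod.fst
    (fun p hp => (mem_product.1 (mem_filter.1 hp).1).1) fun p hp q hq hpq => ?_
  exact Prod.ext hpq (by linarith [(mem_filter.1 hp).2, (mem_filter.1 hq).2])

theorem sg_le_card_right (A B : Finset ℝ) (y : ℝ) : sg A B y ≤ #B := by
  refine card_le_card_of_injOn Prod.snd
    (fun p hp => (mem_product.1 (mem_filter.1 hp).1).2) fun p hp q hq hpq => ?_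
  exact Prod.ext (by linarith [(mem_filter.1 hp).2, (mem_filter.1 hq).2]) hpq

theorem sum_card_graphIncidences_eq (f : ℝ → ℝ) (A B C Y : Finset ℝ) :
    ∑ w ∈ B ×ˢ C, #(graphIncidences f A (Y ×ˢ (A.image f + C)) w) =
      #C * ∑ y ∈ Y, sg A B y := by
  have hinc (b c : ℝ) (hc : c ∈ C) :
      graphIncidences f A (Y ×ˢ (A.image f + C)) (b, c) = {a ∈ A | a + b ∈ Y} :=
    filter_congr fun a ha => by simp [add_mem_add (mem_image_of_mem f ha) hc]
  have hcount : ∑ b ∈ B, #{a ∈ A | a + b ∈ Y} = ∑ y ∈ Y, sg A B y := by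
    rw [sum_sg_eq_card_filter, card_filter, sum_product_right]
    simp only [card_filter]
  rw [sum_product_right, ← hcount, ← smul_eq_mul, ← sum_const]
  exact sum_congr rfl fun c hc => sum_congr rfl fun b _ => by rw [hinc b c hc]

theorem mul_mul_pow_three_le_of_forall_blocks {M D b c τ : ℝ} (hc : 0 ≤ c) (hτ : 0 < τ)
    (hτb : τ ≤ b) (hbM : 12 * b ≤ M * τ) (hMD : M * τ ≤ 2 * D * b)
    (h : ∀ u v : ℕ, 0 < u → 0 < v →
      c * (M * τ) ≤ b * c * (2 * (M / u + D / v + 1)) + M * D * (u * v)) :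
    M * (c * τ ^ 3) ≤ 1152 * D ^ 2 * b ^ 2 := by
  have hb : 0 < b := hτ.trans_le hτb
  have hMτ : 0 < M * τ := by linarith
  have hM : 0 < M := pos_of_mul_pos_left hMτ hτ.le
  have hD : 0 < D := by
    by_contra! hD
    nlinarith
  -- With these block sizes the cells account for at most half of the incidences.
  set x : ℝ := 12 * b / τ with hx
  set y : ℝ := 12 * (D * b) / (M * τ) with hy
  have hx1 : 1 ≤ x := (one_le_div hτ).2 (by linarith)
  have hy1 : 1 ≤ y := (one_le_div hMτ).2 (by linarith)
  have hu : (⌈x⌉₊ : ℝ) ≤ 2 * x := Nat.ceil_le_two_mul (by linarith)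
  have hv : (⌈y⌉₊ : ℝ) ≤ 2 * y := Nat.ceil_le_two_mul (by linarith)
  have hcells : b * c * (2 * (M / ⌈x⌉₊ + D / ⌈y⌉₊ + 1)) ≤ c * (M * τ) / 2 := by
    calc b * c * (2 * (M / ⌈x⌉₊ + D / ⌈y⌉₊ + 1))
        ≤ b * c * (2 * (M / x + D / y + M * τ / (12 * b))) := by
          gcongr
          · exact Nat.le_ceil x
          · exact Nat.le_ceil y
          · exact (one_le_div (by positivity)).2 hbM
      _ = c * (M * τ) / 2 := by
          rw [hx, hy]
          field_simp
          ring
  have hhalf : c * (M * τ) / 2 ≤ M * D * (2 * x * (2 * y)) :=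
    calc c * (M * τ) / 2 ≤ M * D * (⌈x⌉₊ * ⌈y⌉₊) := by
          linarith [h ⌈x⌉₊ ⌈y⌉₊ (Nat.ceil_pos.2 (by linarith)) (Nat.ceil_pos.2 (by linarith))]
      _ ≤ M * D * (2 * x * (2 * y)) := by gcongr
  calc M * (c * τ ^ 3) = c * (M * τ) / 2 * (2 * τ ^ 2) := by ring
    _ ≤ M * D * (2 * x * (2 * y)) * (2 * τ ^ 2) := by gcongr
    _ = 1152 * D ^ 2 * b ^ 2 := by
        rw [hx, hy]
        field_simp
        ring

section RichSums

variable {f : ℝ → ℝ} {s : Set ℝ} {A B C Y : Finset ℝ} {τ : ℝ}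

theorem card_mul_le_sum_sg (hY : ∀ y ∈ Y, τ ≤ sg A B y) :
    #Y * τ ≤ (∑ y ∈ Y, sg A B y : ℕ) := by
  rw [← nsmul_eq_mul, Nat.cast_sum]
  exact card_nsmul_le_sum _ _ _ hY

theorem card_mul_le_of_blocks (hf : StrictConvexOn ℝ s f) (hA : ↑A ⊆ s)
    (hY : ∀ y ∈ Y, τ ≤ sg A B y) {u v : ℕ} (hu : 0 < u) (hv : 0 < v) :
    #C * (#Y * τ) ≤ #B * #C * (2 * ((#Y : ℝ) / u + (#(A.image f + C) : ℝ) / v + 1)) +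
      #Y * #(A.image f + C) * (u * v) := by
  have hinc := sum_card_graphIncidences_le hf hA Y (A.image f + C) (B ×ˢ C) hu hv
  rw [sum_card_graphIncidences_eq, card_product] at hinc
  calc #C * (#Y * τ) ≤ #C * (∑ y ∈ Y, sg A B y : ℕ) := by
        gcongr
        exact card_mul_le_sum_sg hY
    _ ≤ #B * #C * (2 * ((#Y / u : ℕ) + (#(A.image f + C) / v : ℕ) + 1)) +
          #Y * #(A.image f + C) * (u * v) := by exact_mod_cast hinc
    _ ≤ _ := by gcongr <;> exact Nat.cast_div_le

theorem card_mul_card_mul_pow_le (hf : StrictConvexOn ℝ s f) (hA : ↑A ⊆ s) (hC : C.Nonempty)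
    (hτ : 0 < τ) (hY : ∀ y ∈ Y, τ ≤ sg A B y) :
    #Y * (#C * τ ^ 3) ≤ 1152 * (#(A.image f + C) : ℝ) ^ 2 * (#B : ℝ) ^ 2 := by
  rcases Y.eq_empty_or_nonempty with rfl | ⟨y, hy⟩
  · simp only [card_empty, Nat.cast_zero, zero_mul]
    positivity
  have hτA : τ ≤ #A := (hY y hy).trans (by exact_mod_cast sg_le_card_left A B y)
  have hτB : τ ≤ #B := (hY y hy).trans (by exact_mod_cast sg_le_card_right A B y)
  have hAne : A.Nonempty := card_pos.1 (by exact_mod_cast hτ.trans_le hτA)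
  have hAD : #A ≤ 2 * #(A.image f + C) :=
    (card_le_two_mul_card_image_of_strictConvexOn hf hA).trans
      (Nat.mul_le_mul_left 2 (card_le_card_add_right hC))
  have hCD : #C ≤ #(A.image f + C) := card_le_card_add_left (hAne.image f)
  rcases le_total (12 * #B : ℝ) (#Y * τ) with hrich | hpoor
  · refine mul_mul_pow_three_le_of_forall_blocks (Nat.cast_nonneg _) hτ hτB hrich ?_
      fun u v hu hv => card_mul_le_of_blocks hf hA hY hu hv
    calc #Y * τ ≤ (∑ y ∈ Y, sg A B y : ℕ) := card_mul_le_sum_sg hY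
      _ ≤ #A * #B := by
          rw [sum_sg_eq_card_filter]
          exact_mod_cast (card_filter_le _ _).trans_eq (card_product A B)
      _ ≤ 2 * #(A.image f + C) * #B := by
          gcongr
          exact_mod_cast hAD
  · calc #Y * (#C * τ ^ 3) = #Y * τ * #C * (τ * τ) := by ring
      _ ≤ 12 * #B * #C * (#A * #B) := by gcongr
      _ ≤ 12 * #B * #(A.image f + C) * (2 * #(A.image f + C) * #B) := by
          gcongr
          exact_mod_cast hAD
      _ ≤ 1152 * (#(A.image f + C) : ℝ) ^ 2 * (#B : ℝ) ^ 2 := by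
          rw [← sub_nonneg]
          ring_nf
          positivity

end RichSums

theorem stmt5_general {f : ℝ → ℝ} {s : Set ℝ} (hf : StrictConvexOn ℝ s f) {A B C : Finset ℝ}
    (hA : ↑A ⊆ s) (hC : C.Nonempty) {τ : ℝ} (hτ : 0 < τ) :
    (#{y ∈ A + B | τ ≤ (sg A B y : ℝ)} : ℝ) ≤
      1152 * (#(A.image f + C) : ℝ) ^ 2 * (#B : ℝ) ^ 2 / (#C * τ ^ 3) := by
  have : (0 : ℝ) < #C := by exact_mod_cast hC.card_pos
  rw [le_div_iff₀ (by positivity)]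
  exact card_mul_card_mul_pow_le hf hA hC hτ fun y hy => (mem_filter.1 hy).2

theorem stmt5 : ∃ K : ℝ, 0 < K ∧
    ∀ f : ℝ → ℝ, Continuous f → StrictConvexOn ℝ Set.univ f →
    ∀ A B C : Finset ℝ, A.Nonempty → B.Nonempty → C.Nonempty →
    A.card ^ 2 ≤ B.card * C.card →
    ∀ τ : ℝ, 1 ≤ τ →
    (((A + B).filter (fun y => τ ≤ (sg A B y : ℝ))).card : ℝ) ≤
      K * ((A.image f + C).card : ℝ) ^ 2 * (B.card : ℝ) ^ 2 / ((C.card : ℝ) * τ ^ 3) := by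
  exact ⟨1152, by norm_num, fun f _ hf A B C _ _ hC _ τ hτ =>
    stmt5_general hf (Set.subset_univ _) hC (zero_lt_one.trans_le hτ)⟩
end
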